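/- arXiv:2605.08290 — 6 statements merged into one kernel-verified Lean document; each statement's English description precedes it below -/
import Mathlib

section
/- In robust dynamic pricing with corruption budget C, any deterministic pricing algorithm suffers worst-case regret R_T ≥ Ω(C), even when C is known to the seller. Concretely: for any deterministic algorithm there is a valuation v* ∈ [0,1) and an adversarial corruption of at most C rounds under which the algorithm's regret is at least a constant multiple of C. -/
/-!
The adversary spends its whole budget on the first `C` rounds, reporting a sale in each of them,
and is truthful afterwards. The prices posted in the first `C` rounds are then the same whatever
the valuation. Every price `p` satisfies
`(1/4 - p·1{p ≤ 1/4}) + (3/4 - p·1{p ≤ 3/4}) ≥ 1/4` (`pair_loss`), so the regrets over these rounds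
for the valuations `1/4` and `3/4` add up to at least `C/4`, and one of them is at least `C/8`.
The remaining rounds contribute nonnegatively, because a sale at price `p ≤ v` loses `v - p ≥ 0`.
-/

namespace RobustPricing

/-- The one-round regret of posting the price `p` against the valuation `v`. -/
noncomputable def loss (v p : ℝ) : ℝ := v - p * (if p ≤ v then 1 else 0)

lemma loss_nonneg {v p : ℝ} (hv : 0 ≤ v) : 0 ≤ loss v p := by
  unfold loss
  split_ifs <;> linarith

/-- No price does well against both candidate valuations. -/
lemma pair_loss (p : ℝ) : 1 / 4 ≤ loss (1 / 4) p + loss (3 / 4) p := by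
  unfold loss
  split_ifs <;> linarith

/-- The feedback observed in round `t` after the history `l`, for the valuation `v`: a reported
sale during the first `C` rounds, the truth afterwards. -/
noncomputable def reply (C : ℕ) (alg : List Bool → ℝ) (v : ℝ) (t : ℕ) (l : List Bool) : Bool :=
  if t < C then true else decide (alg l ≤ v)

/-- The list of the first `t` observed feedbacks under `reply`. -/
noncomputable def hist (C : ℕ) (alg : List Bool → ℝ) (v : ℝ) : ℕ → List Bool
  | 0 => []
  | t + 1 => hist C alg v t ++ [reply C alg v t (hist C alg v t)]

/-- The observed feedback sequence under `reply`. -/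
noncomputable def feedback (C : ℕ) (alg : List Bool → ℝ) (v : ℝ) (t : ℕ) : Bool :=
  reply C alg v t (hist C alg v t)

lemma map_feedback (C : ℕ) (alg : List Bool → ℝ) (v : ℝ) (t : ℕ) :
    (List.range t).map (feedback C alg v) = hist C alg v t := by
  induction t with
  | zero => rfl
  | succ t ih => simp [List.range_succ, ih, hist, feedback]

/-- During the corrupted phase the history does not depend on the valuation. -/
lemma hist_eq_replicate (C : ℕ) (alg : List Bool → ℝ) (v : ℝ) (t : ℕ) (ht : t ≤ C) :
    hist C alg v t = List.replicate t true := by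
  induction t with
  | zero => rfl
  | succ t ih =>
    have h : t < C := ht
    rw [hist, ih h.le, reply, if_pos h, List.replicate_succ']

lemma card_corrupted_le (T C : ℕ) (alg : List Bool → ℝ) (v : ℝ) :
    ((Finset.range T).filter (fun t => feedback C alg v t ≠
      decide (alg ((List.range t).map (feedback C alg v)) ≤ v))).card ≤ C := by
  calc _ ≤ (Finset.range C).card := by
        apply Finset.card_le_card
        intro t ht
        rw [Finset.mem_filter, map_feedback] at ht
        by_contra h
        rw [Finset.mem_range] at h
        exact ht.2 (by rw [feedback, reply, if_neg h])
    _ = C := Finset.card_range C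

/-- The total regret is at least the regret of the corrupted phase. -/
lemma regret_ge {T C : ℕ} (hCT : C ≤ T) (alg : List Bool → ℝ) {v : ℝ} (hv : 0 ≤ v) :
    ∑ t ∈ Finset.range C, loss v (alg (List.replicate t true)) ≤
      (T : ℝ) * v - ∑ t ∈ Finset.range T, alg ((List.range t).map (feedback C alg v)) *
        (if alg ((List.range t).map (feedback C alg v)) ≤ v then 1 else 0) := by
  have h : (T : ℝ) * v - ∑ t ∈ Finset.range T, alg ((List.range t).map (feedback C alg v)) *
      (if alg ((List.range t).map (feedback C alg v)) ≤ v then 1 else 0) =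
      ∑ t ∈ Finset.range T, loss v (alg (hist C alg v t)) := by
    simp only [loss, map_feedback, Finset.sum_sub_distrib, Finset.sum_const, Finset.card_range,
      nsmul_eq_mul]
  rw [h]
  calc _ = ∑ t ∈ Finset.range C, loss v (alg (hist C alg v t)) :=
        Finset.sum_congr rfl fun t ht => by
          rw [hist_eq_replicate C alg v t (Finset.mem_range.1 ht).le]
    _ ≤ _ := Finset.sum_le_sum_of_subset_of_nonneg (Finset.range_subset_range.2 hCT)
        fun _ _ _ => loss_nonneg hv

end RobustPricing

open RobustPricing

/-- In robust dynamic pricing with corruption budget `C`, any deterministic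
pricing algorithm (a map from the past observed binary feedback to a price in `[0,1]`) suffers
worst-case regret `Ω(C)`, even when `C` is known: there is a universal constant `c > 0` such
that for every horizon `T`, corruption budget `C ≤ T`, and deterministic algorithm `alg`
(which may depend on `T` and `C`), there exist a valuation `v ∈ [0,1)` and an observed
feedback sequence `obs` that differs from the truthful feedback `1{pₜ ≤ v}` in at most `C`
rounds, under which the regret `T·v − Σₜ pₜ·1{pₜ ≤ v}` is at least `c·C`. -/
theorem robust_pricing_deterministic_lower_bound :
    ∃ c : ℝ, 0 < c ∧
      ∀ (T C : ℕ), C ≤ T →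
        ∀ alg : List Bool → ℝ, (∀ l : List Bool, alg l ∈ Set.Icc (0 : ℝ) 1) →
          ∃ v : ℝ, v ∈ Set.Ico (0 : ℝ) 1 ∧
            ∃ obs : ℕ → Bool,
              ((Finset.range T).filter
                  (fun t => obs t ≠ decide (alg ((List.range t).map obs) ≤ v))).card ≤ C ∧
              c * C ≤ (T : ℝ) * v - ∑ t ∈ Finset.range T,
                  alg ((List.range t).map obs) *
                    (if alg ((List.range t).map obs) ≤ v then 1 else 0) := by
  refine ⟨1 / 8, by norm_num, fun T C hCT alg _ => ?_⟩
  have hsum : (C : ℝ) * (1 / 4) ≤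
      ∑ t ∈ Finset.range C, loss (1 / 4) (alg (List.replicate t true)) +
        ∑ t ∈ Finset.range C, loss (3 / 4) (alg (List.replicate t true)) := by
    rw [← Finset.sum_add_distrib]
    simpa using Finset.card_nsmul_le_sum (Finset.range C) _ (1 / 4 : ℝ)
      fun t _ => pair_loss (alg (List.replicate t true))
  rcases le_total ((1 / 8 : ℝ) * C)
    (∑ t ∈ Finset.range C, loss (1 / 4) (alg (List.replicate t true))) with h | h
  · exact ⟨1 / 4, by norm_num, feedback C alg (1 / 4), card_corrupted_le T C alg _,
      h.trans (regret_ge hCT alg (by norm_num))⟩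
  · exact ⟨3 / 4, by norm_num, feedback C alg (3 / 4), card_corrupted_le T C alg _,
      le_trans (by linarith) (regret_ge hCT alg (by norm_num))⟩
end

section
/- Every honest search step q of the meta-algorithm at a non-leaf interval I^q ∉ L decreases the potential by exactly one: Φ_{q+1} = Φ_q − 1. (If I^q is on the root-to-ℓ* path, the uncorrupted safety check passes and the uncorrupted midpoint query moves to the unique on-path child; if I^q is off-path, the uncorrupted safety check fails and the algorithm backtracks to the parent, which is one step closer to ℓ*.) -/
/-!
Write `n = ⌊v·2^D⌋`, so that `n / 2^(D-j) = ⌊v·2^j⌋` is the index of the depth-`j` ancestor of the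
leaf `ℓ* = (D, n)` (`leaf_ancestor`). Hence an honest safety check at `(d, k)` passes exactly
when `(d, k)` is an ancestor of `ℓ*`.

* On the root-to-leaf path, the honest midpoint query selects the child `(d+1, ⌊v·2^(d+1)⌋)`, again
  an ancestor of `ℓ*`, and an ancestor at depth `e` has distance `D - e` (`treeDist_ancestor`).
* Off the path, `d > 0` and the least common ancestor with `ℓ*` lies strictly above `(d, k)`, so it
  is unchanged by passing to the parent, while the depth drops by one (`treeDist_parent`).
-/

/-- Nodes of the dyadic interval tree are pairs `(d, k)` with `k < 2^d`, representing the
interval `[k/2^d, (k+1)/2^d)`.  `treeDist a b` is the length of the shortest path between the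
nodes `a` and `b` in this tree: `a.1 + b.1 − 2·j` where `j` is the depth of their least
common ancestor. -/
def treeDist (a b : ℕ × ℕ) : ℕ :=
  a.1 + b.1 -
    2 * Nat.findGreatest (fun j => a.2 / 2 ^ (a.1 - j) = b.2 / 2 ^ (b.1 - j)) (min a.1 b.1)

open Classical in
/-- One honest (uncorrupted) search step of the meta-algorithm at a non-leaf dyadic interval
`I = [k/2^d, (k+1)/2^d)`: the safety check posts the endpoints `L, R` and passes iff the
honest feedback is consistent with `v ∈ I` (i.e. `σ_L = 1{L ≤ v} = 1` and
`σ_R = 1{R ≤ v} = 0`); if it passes, the midpoint `M = (L+R)/2` is posted and the algorithm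
descends to `[M,R)` if `σ_M = 1{M ≤ v} = 1` and to `[L,M)` otherwise; if it fails, the
algorithm backtracks to the parent interval. -/
noncomputable def honestStep (v : ℝ) (p : ℕ × ℕ) : ℕ × ℕ :=
  if (p.2 : ℝ) / 2 ^ p.1 ≤ v ∧ v < ((p.2 : ℝ) + 1) / 2 ^ p.1 then
    if (2 * (p.2 : ℝ) + 1) / 2 ^ (p.1 + 1) ≤ v then (p.1 + 1, 2 * p.2 + 1)
    else (p.1 + 1, 2 * p.2)
  else (p.1 - 1, p.2 / 2)

lemma findGreatest_congr_of_le {P Q : ℕ → Prop} [DecidablePred P] [DecidablePred Q] {n : ℕ}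
    (h : ∀ j ≤ n, (P j ↔ Q j)) : Nat.findGreatest P n = Nat.findGreatest Q n := by
  induction n with
  | zero => simp
  | succ n ih =>
    rw [Nat.findGreatest_succ, Nat.findGreatest_succ, ih fun j hj => h j (by omega)]
    simp only [h (n + 1) le_rfl]

/-- The depth-`j` ancestor of the leaf containing `v` is the depth-`j` dyadic interval
containing `v`. -/
lemma leaf_ancestor (v : ℝ) {j D : ℕ} (hj : j ≤ D) :
    ⌊v * 2 ^ D⌋₊ / 2 ^ (D - j) = ⌊v * 2 ^ j⌋₊ := by
  obtain ⟨m, rfl⟩ := Nat.exists_eq_add_of_le hj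
  rw [← Nat.floor_div_natCast]
  congr 1
  rw [Nat.add_sub_cancel_left, pow_add]
  push_cast
  field_simp

lemma mem_dyadic_iff {v : ℝ} (hv : 0 ≤ v) (d k : ℕ) :
    ((k : ℝ) / 2 ^ d ≤ v ∧ v < ((k : ℝ) + 1) / 2 ^ d) ↔ ⌊v * 2 ^ d⌋₊ = k := by
  have h2 : (0 : ℝ) < 2 ^ d := by positivity
  rw [Nat.floor_eq_iff (by positivity), div_le_iff₀ h2, lt_div_iff₀ h2]

lemma treeDist_ancestor {e D n : ℕ} (he : e ≤ D) :
    treeDist (e, n / 2 ^ (D - e)) (D, n) = D - e := by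
  have h : Nat.findGreatest
      (fun j => n / 2 ^ (D - e) / 2 ^ (e - j) = n / 2 ^ (D - j)) e = e :=
    Nat.findGreatest_eq (by simp)
  simp only [treeDist, min_eq_left he, h]
  omega

lemma treeDist_parent {d D k n : ℕ} (hd : d + 1 ≤ D) (hne : k ≠ n / 2 ^ (D - (d + 1))) :
    treeDist (d, k / 2) (D, n) + 1 = treeDist (d + 1, k) (D, n) := by
  -- The least common ancestor is not `(d + 1, k)` itself, so only depths up to `d` matter.
  have h1 : Nat.findGreatest
      (fun j => k / 2 ^ (d + 1 - j) = n / 2 ^ (D - j)) (d + 1) =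
      Nat.findGreatest (fun j => k / 2 ^ (d + 1 - j) = n / 2 ^ (D - j)) d :=
    Nat.findGreatest_of_not (by simpa using hne)
  have h2 : Nat.findGreatest (fun j => k / 2 ^ (d + 1 - j) = n / 2 ^ (D - j)) d =
      Nat.findGreatest (fun j => k / 2 / 2 ^ (d - j) = n / 2 ^ (D - j)) d := by
    have key : ∀ j ≤ d, k / 2 / 2 ^ (d - j) = k / 2 ^ (d + 1 - j) := by
      intro j hj
      rw [Nat.div_div_eq_div_mul, Nat.sub_add_comm hj, pow_succ']
    exact findGreatest_congr_of_le fun j hj => by rw [key j hj]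
  have h3 := Nat.findGreatest_le (P := fun j => k / 2 / 2 ^ (d - j) = n / 2 ^ (D - j)) d
  simp only [treeDist, min_eq_left hd, min_eq_left (Nat.le_of_succ_le hd), h1, h2]
  omega

/-- Every honest search step of the meta-algorithm at a non-leaf interval
(depth `d < D`, where leaves sit at depth `D = ⌈log₂ T⌉` and `ℓ* = (D, ⌊v·2^D⌋)` is the leaf
containing the valuation `v ∈ [0,1)`) decreases the potential
`Φ = treeDist(current node, ℓ*)` by exactly one: `Φ_{q+1} = Φ_q − 1`. -/
theorem honest_step_decreases_potential
    (T D : ℕ) (hD : D = Nat.clog 2 T)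
    (v : ℝ) (hv : 0 ≤ v) (hv1 : v < 1)
    (d k : ℕ) (hd : d < D) (hk : k < 2 ^ d) :
    treeDist (honestStep v (d, k)) (D, ⌊v * 2 ^ D⌋₊) + 1
      = treeDist (d, k) (D, ⌊v * 2 ^ D⌋₊) := by
  have hanc : ⌊v * 2 ^ D⌋₊ / 2 ^ (D - d) = ⌊v * 2 ^ d⌋₊ := leaf_ancestor v hd.le
  by_cases hpath : ⌊v * 2 ^ d⌋₊ = k
  · have hin := (mem_dyadic_iff hv d k).2 hpath
    -- The honest midpoint query selects the child containing `v`.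
    have hstep : honestStep v (d, k) = (d + 1, ⌊v * 2 ^ D⌋₊ / 2 ^ (D - (d + 1))) := by
      rw [leaf_ancestor v (Nat.succ_le_of_lt hd)]
      simp only [honestStep, if_pos hin]
      obtain ⟨hL, hR⟩ := hin
      have h2 : (0 : ℝ) < 2 ^ d := by positivity
      have h3 : (0 : ℝ) < 2 ^ (d + 1) := by positivity
      rw [div_le_iff₀ h2] at hL
      rw [lt_div_iff₀ h2] at hR
      split_ifs with hM
      · rw [div_le_iff₀ h3] at hM
        refine Prod.ext rfl (Eq.symm ((Nat.floor_eq_iff (by positivity)).2 ⟨?_, ?_⟩))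
        · push_cast
          exact hM
        · push_cast
          rw [pow_succ]
          linarith
      · rw [not_le, lt_div_iff₀ h3] at hM
        refine Prod.ext rfl (Eq.symm ((Nat.floor_eq_iff (by positivity)).2 ⟨?_, ?_⟩))
        · push_cast
          rw [pow_succ]
          linarith
        · push_cast
          exact hM
    have hcur : treeDist (d, k) (D, ⌊v * 2 ^ D⌋₊) = D - d := by
      rw [← hpath, ← hanc]
      exact treeDist_ancestor hd.le
    rw [hstep, treeDist_ancestor (Nat.succ_le_of_lt hd), hcur]
    omega
  · have hout := mt (mem_dyadic_iff hv d k).1 hpath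
    simp only [honestStep, if_neg hout]
    cases d with
    | zero =>
      -- The root contains every `v ∈ [0, 1)`, so it is never off-path.
      refine absurd ?_ hpath
      have hk0 : k = 0 := by simpa using hk
      simpa [hk0] using hv1
    | succ d =>
      exact treeDist_parent hd.le fun h => hpath (hanc.symm.trans h.symm)
end

section
/- For every n ≥ 2 and every C ≥ 0, the robust binary-search procedure of Rivest et al. identifies an unknown element x ∈ {1,…,n} under at most C erroneous comparison answers using at most C + ⌈16(⌈log₂ n⌉ + C)⌉ = O(log n + C) comparisons in the worst case. -/
/-!
The strategy is a backtracking walk on the infinite binary tree. Put `L = ⌈log₂ n⌉` and `y = x - 1`,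
so that `y < 2 ^ L`. The node `(d, k)` at depth `d` stands for the dyadic interval
`[k / 2 ^ d, (k + 1) / 2 ^ d)`, and the nodes containing the target point `y / 2 ^ L` form a path
`(d, path L y d)` that passes through `(L, y)`. Comparing the target with a dyadic point is a single
comparison query about `x` (`le_threshold_iff`).

A round consists of three queries at the current node `(d, k)`: two test whether the target lies in
the interval of the node, the third one in which half of it. The walk moves to the
indicated child if the tests pass and back to the parent otherwise. A round without an erroneous
answer brings the walk one step closer to the far end of the target path, and a round with an error
takes it at most one step further away (`walk_invariant`). After `T` rounds, if the lowest ancestor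
of the current node on the path lies `m` levels up, then `T + 2 m ≤ d + 2 C`. The query budget
allows `T ≥ L + 2 C` rounds, which forces `d - m ≥ L`: the ancestor of the current node at depth `L`
is then `(L, y)`, and `x` can be read off.
-/

namespace RobustSearch

/-- Index, among the `2 ^ d` dyadic intervals of depth `d`, of the one containing `y / 2 ^ L`. -/
def path (L y d : ℕ) : ℕ := y * 2 ^ d / 2 ^ L

/-- The comparison query that tests whether the target lies to the left of `k / 2 ^ d`: the value
`⌈k * 2 ^ L / 2 ^ d⌉`. -/
def threshold (L d k : ℕ) : ℕ := (k * 2 ^ L + (2 ^ d - 1)) / 2 ^ d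

/-- One move of the walk from the node `s = (d, k)`. The answers `a`, `b`, `c` say whether the target
is left of the left end, of the right end and of the midpoint of the node. The parent of
the root is the root. -/
def step (s : ℕ × ℕ) (a b c : Bool) : ℕ × ℕ :=
  if a = false ∧ b = true then (s.1 + 1, 2 * s.2 + if c then 0 else 1) else (s.1 - 1, s.2 / 2)

/-- The node reached after `i` rounds of three answers each. -/
def walk (ans : ℕ → Bool) : ℕ → ℕ × ℕ
  | 0 => (0, 0)
  | i + 1 => step (walk ans i) (ans (3 * i)) (ans (3 * i + 1)) (ans (3 * i + 2))

/-- The query asked at the node `s` in position `j ∈ {0, 1, 2}` of a round. -/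
def nodeQuery (L : ℕ) (s : ℕ × ℕ) (j : ℕ) : ℕ :=
  if j = 0 then threshold L s.1 s.2
  else if j = 1 then threshold L s.1 (s.2 + 1)
  else threshold L (s.1 + 1) (2 * s.2 + 1)

/-- The infinite answer sequence extending a finite history by `false`. -/
def extend (h : List Bool) (i : ℕ) : Bool := h.getD i false

/-- The query following the history `h`. -/
def query (L : ℕ) (h : List Bool) : ℕ :=
  nodeQuery L (walk (extend h) (h.length / 3)) (h.length % 3)

/-- The index of the depth-`L` ancestor of the final node, shifted from `y` to `x = y + 1`. -/
def guess (L : ℕ) (h : List Bool) : ℕ :=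
  (walk (extend h) (h.length / 3)).2 / 2 ^ ((walk (extend h) (h.length / 3)).1 - L) + 1

lemma path_add_div (L y d j : ℕ) : path L y (d + j) / 2 ^ j = path L y d := by
  unfold path
  rw [Nat.div_div_eq_div_mul, pow_add, ← mul_assoc, Nat.mul_div_mul_right _ _ (by positivity)]

lemma path_succ_div (L y d : ℕ) : path L y (d + 1) / 2 = path L y d := by
  simpa using path_add_div L y d 1

lemma path_zero {L y : ℕ} (hy : y < 2 ^ L) : path L y 0 = 0 := by
  simp [path, Nat.div_eq_of_lt hy]

lemma path_self (L y : ℕ) : path L y L = y := by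
  simp [path]

lemma le_threshold_iff (L y d k : ℕ) : y + 1 ≤ threshold L d k ↔ path L y d < k := by
  unfold threshold path
  have hd : 0 < 2 ^ d := by positivity
  rw [Nat.le_div_iff_mul_le hd, Nat.div_lt_iff_lt_mul (by positivity), add_mul]
  omega

lemma walk_congr {f g : ℕ → Bool} (i : ℕ) (h : ∀ j < 3 * i, f j = g j) : walk f i = walk g i := by
  induction i with
  | zero => rfl
  | succ i ih =>
    simp only [walk]
    rw [ih fun j hj => h j (by omega), h _ (by omega), h _ (by omega), h _ (by omega)]

lemma walk_history (ans : ℕ → Bool) (N : ℕ) :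
    walk (extend ((List.range N).map ans)) (N / 3) = walk ans (N / 3) := by
  refine walk_congr _ fun j hj => ?_
  have hN : j < N := by omega
  simp [extend, List.getD, hN]

lemma query_history (L : ℕ) (ans : ℕ → Bool) (N : ℕ) :
    query L ((List.range N).map ans) = nodeQuery L (walk ans (N / 3)) (N % 3) := by
  simp only [query, List.length_map, List.length_range, walk_history]

/-- `m` levels above the node `s` there is a node on the path of the target. -/
def Near (L y : ℕ) (s : ℕ × ℕ) (m : ℕ) : Prop :=
  m ≤ s.1 ∧ s.2 / 2 ^ m = path L y (s.1 - m)

lemma near_parent {L y m : ℕ} {s : ℕ × ℕ} (h : Near L y s (m + 1)) :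
    Near L y (s.1 - 1, s.2 / 2) m := by
  obtain ⟨h1, h2⟩ := h
  refine ⟨by simp only; omega, ?_⟩
  simp only
  rw [Nat.div_div_eq_div_mul, ← pow_succ', h2]
  congr 1
  omega

lemma near_child {L y m e : ℕ} {s : ℕ × ℕ} (he : e ≤ 1) (h : Near L y s m) :
    Near L y (s.1 + 1, 2 * s.2 + e) (m + 1) := by
  obtain ⟨h1, h2⟩ := h
  refine ⟨by simp only; omega, ?_⟩
  simp only
  rw [pow_succ', ← Nat.div_div_eq_div_mul, show (2 * s.2 + e) / 2 = s.2 by omega, h2]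
  congr 1
  omega

/-- A round of three correct answers increases `d - 2 m` by at least one. -/
lemma step_correct {L y m : ℕ} {s : ℕ × ℕ} {a b c : Bool} (h : Near L y s m)
    (ha : a = decide (path L y s.1 < s.2)) (hb : b = decide (path L y s.1 < s.2 + 1))
    (hc : c = decide (path L y (s.1 + 1) < 2 * s.2 + 1)) :
    ∃ m', Near L y (step s a b c) m' ∧ s.1 + 1 + 2 * m' ≤ (step s a b c).1 + 2 * m := by
  by_cases hp : path L y s.1 = s.2
  · have hs := path_succ_div L y s.1
    have hstep : step s a b c = (s.1 + 1, path L y (s.1 + 1)) := by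
      subst ha hb hc
      simp only [step, hp]
      rw [if_pos (by simp)]
      congr 1
      simp only [decide_eq_true_eq]
      split_ifs <;> omega
    rw [hstep]
    exact ⟨0, ⟨by simp, by simp⟩, by simp only; omega⟩
  · have hstep : step s a b c = (s.1 - 1, s.2 / 2) := by
      subst ha hb
      refine if_neg ?_
      simp only [decide_eq_false_iff_not, decide_eq_true_eq]
      omega
    rw [hstep]
    cases m with
    | zero => exact absurd (by simpa using h.2.symm) hp
    | succ m =>
      have := h.1
      exact ⟨m, near_parent h, by simp only; omega⟩

/-- Whatever the answers, a round decreases `d - 2 m` by at most one. -/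
lemma step_any {L y m : ℕ} (hy : y < 2 ^ L) {s : ℕ × ℕ} (a b c : Bool) (h : Near L y s m) :
    ∃ m', Near L y (step s a b c) m' ∧ s.1 + 2 * m' ≤ (step s a b c).1 + 1 + 2 * m := by
  unfold step
  by_cases hab : a = false ∧ b = true
  · rw [if_pos hab]
    exact ⟨m + 1, near_child (by split_ifs <;> omega) h, by simp only; omega⟩
  · rw [if_neg hab]
    cases m with
    | succ m => exact ⟨m, near_parent h, by simp only; omega⟩
    | zero =>
      obtain ⟨-, h2⟩ := h
      simp only [pow_zero, Nat.div_one, Nat.sub_zero] at h2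
      refine ⟨0, ⟨by simp, ?_⟩, by simp only; omega⟩
      simp only [pow_zero, Nat.div_one, Nat.sub_zero, h2]
      rcases hd : s.1 with _ | d
      · simp [path_zero hy]
      · exact path_succ_div L y d

/-- Number of erroneous answers among the first `N`, for the target `x = y + 1`. -/
def errors (L y : ℕ) (ans : ℕ → Bool) (N : ℕ) : ℕ :=
  ((Finset.range N).filter
    (fun i => ans i ≠ decide (y + 1 ≤ query L ((List.range i).map ans)))).card

lemma errors_succ (L y : ℕ) (ans : ℕ → Bool) (N : ℕ) :
    errors L y ans (N + 1) = errors L y ans N +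
      if ans N = decide (y + 1 ≤ query L ((List.range N).map ans)) then 0 else 1 := by
  unfold errors
  rw [Finset.range_add_one, Finset.filter_insert]
  by_cases h : ans N = decide (y + 1 ≤ query L ((List.range N).map ans))
  · rw [if_neg (not_not.mpr h), if_pos h, add_zero]
  · rw [if_pos h, if_neg h, Finset.card_insert_of_notMem (by simp)]

lemma errors_mono (L y : ℕ) (ans : ℕ → Bool) : Monotone (errors L y ans) :=
  monotone_nat_of_le_succ fun N => by rw [errors_succ]; omega

/-- The progress `d - 2 m` is at least the number of rounds minus twice the number of errors. -/
lemma walk_invariant {L y : ℕ} (hy : y < 2 ^ L) (ans : ℕ → Bool) (i : ℕ) :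
    ∃ m, Near L y (walk ans i) m ∧ i + 2 * m ≤ (walk ans i).1 + 2 * errors L y ans (3 * i) := by
  induction i with
  | zero => exact ⟨0, ⟨by simp, by simp [walk, path_zero hy]⟩, by simp⟩
  | succ i ih =>
    obtain ⟨m, hm, hle⟩ := ih
    have e0 := errors_succ L y ans (3 * i)
    have e1 : errors L y ans (3 * i + 2) = _ := errors_succ L y ans (3 * i + 1)
    have e2 := errors_succ L y ans (3 * i + 2)
    rw [query_history, show 3 * i / 3 = i by omega, show 3 * i % 3 = 0 by omega] at e0
    rw [query_history, show (3 * i + 1) / 3 = i by omega, show (3 * i + 1) % 3 = 1 by omega] at e1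
    rw [query_history, show (3 * i + 2) / 3 = i by omega, show (3 * i + 2) % 3 = 2 by omega] at e2
    simp only [nodeQuery, if_true, one_ne_zero, if_false, OfNat.ofNat_ne_zero, OfNat.ofNat_ne_one,
      le_threshold_iff] at e0 e1 e2
    rw [show 3 * (i + 1) = 3 * i + 2 + 1 by ring]
    by_cases hgood : errors L y ans (3 * i + 2 + 1) = errors L y ans (3 * i)
    · have ha : ans (3 * i) = decide (path L y (walk ans i).1 < (walk ans i).2) := by
        by_contra hne
        rw [if_neg hne] at e0
        omega
      have hb : ans (3 * i + 1) = decide (path L y (walk ans i).1 < (walk ans i).2 + 1) := by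
        by_contra hne
        rw [if_neg hne] at e1
        omega
      have hc : ans (3 * i + 2) =
          decide (path L y ((walk ans i).1 + 1) < 2 * (walk ans i).2 + 1) := by
        by_contra hne
        rw [if_neg hne] at e2
        omega
      obtain ⟨m', hm', hle'⟩ := step_correct hm ha hb hc
      exact ⟨m', hm', by simp only [walk]; omega⟩
    · obtain ⟨m', hm', hle'⟩ := step_any hy (ans (3 * i)) (ans (3 * i + 1)) (ans (3 * i + 2)) hm
      have hmono := errors_mono L y ans (show 3 * i ≤ 3 * i + 2 + 1 by omega)
      exact ⟨m', hm', by simp only [walk]; omega⟩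

end RobustSearch

/-- For every `n ≥ 2` and every `C ≥ 0`, there is a robust binary-search
strategy (an adaptive deterministic sequence of comparison queries "is `x ≤ a`?" together
with a final guess) that identifies any unknown element `x ∈ {1, …, n}` using at most
`Q := C + ⌈16(⌈log₂ n⌉ + C)⌉ = C + 16(⌈log₂ n⌉ + C) = O(log n + C)` comparisons in the
worst case, provided at most `C` of the comparison answers are erroneous. -/
theorem rivest_robust_binary_search (n C : ℕ) (hn : 2 ≤ n) :
    ∃ (query : List Bool → ℕ) (guess : List Bool → ℕ),
      ∀ x ∈ Finset.Icc 1 n, ∀ ans : ℕ → Bool,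
        ((Finset.range (C + 16 * (Nat.clog 2 n + C))).filter
            (fun i => ans i ≠ decide (x ≤ query ((List.range i).map ans)))).card ≤ C →
        guess ((List.range (C + 16 * (Nat.clog 2 n + C))).map ans) = x := by
  refine ⟨RobustSearch.query (Nat.clog 2 n), RobustSearch.guess (Nat.clog 2 n), ?_⟩
  intro x hx ans herr
  obtain ⟨hx1, hxn⟩ := Finset.mem_Icc.mp hx
  obtain ⟨y, rfl⟩ : ∃ y, x = y + 1 := ⟨x - 1, by omega⟩
  have hpow : n ≤ 2 ^ Nat.clog 2 n := Nat.le_pow_clog (by norm_num) n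
  generalize Nat.clog 2 n = L at *
  change RobustSearch.errors L y ans (C + 16 * (L + C)) ≤ C at herr
  generalize hQ : C + 16 * (L + C) = Q at *
  obtain ⟨m, ⟨hmd, hm⟩, hle⟩ := RobustSearch.walk_invariant (by omega : y < 2 ^ L) ans (Q / 3)
  have hmono := RobustSearch.errors_mono L y ans (show 3 * (Q / 3) ≤ Q by omega)
  simp only [RobustSearch.guess, List.length_map, List.length_range, RobustSearch.walk_history]
  generalize RobustSearch.walk ans (Q / 3) = s at *
  -- The ancestor `m` levels up is on the path at depth at least `L`, hence at or below `(L, y)`.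
  have hdepth : L + m ≤ s.1 := by omega
  obtain ⟨j, hj⟩ := Nat.exists_eq_add_of_le hdepth
  rw [show s.1 - L = m + j by omega, pow_add, ← Nat.div_div_eq_div_mul, hm,
    show s.1 - m = L + j by omega, RobustSearch.path_add_div, RobustSearch.path_self]
end

section
/- Let n ≥ 2 and C ≥ 0 be integers, and set Q' := C + ⌈16(⌈log₂ n⌉ + C)⌉. Then 2^{Q'−C} > n · Σ_{i=0}^{C} binom(Q'−C, i). -/
/-!
This is a Chernoff bound. Write `L = ⌈log₂ n⌉`, `k = L + C` and `m = 16 k`. Weighting the binomial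
expansion of `(1 + 2) ^ m` gives `2 ^ m * ∑_{i ≤ C} binom(m, i) ≤ 2 ^ C * 3 ^ m`
(`sum_choose_mul_two_pow_le`). With `n ≤ 2 ^ L` this yields
`n * ∑_{i ≤ C} binom(m, i) * 2 ^ m ≤ 2 ^ k * 3 ^ (16 k) = (2 * 3 ^ 16) ^ k`, which is less than
`(4 ^ 16) ^ k = 2 ^ m * 2 ^ m` because `2 * 3 ^ 16 < 4 ^ 16` and `k ≥ 1`.
-/

/-- The Chernoff bound for the lower binomial tail at parameter `2`: for `i ≤ C`,
`2 ^ m ≤ 2 ^ C * 2 ^ (m - i)`, and the terms `2 ^ (m - i) * binom(m, i)` sum to at most `3 ^ m`. -/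
theorem sum_choose_mul_two_pow_le (m C : ℕ) (h : C ≤ m) :
    (∑ i ∈ Finset.range (C + 1), Nat.choose m i) * 2 ^ m ≤ 2 ^ C * 3 ^ m := by
  have h3 : (3 : ℕ) ^ m = ∑ i ∈ Finset.range (m + 1), 2 ^ (m - i) * Nat.choose m i := by
    simpa using add_pow (1 : ℕ) 2 m
  calc (∑ i ∈ Finset.range (C + 1), Nat.choose m i) * 2 ^ m
      = ∑ i ∈ Finset.range (C + 1), Nat.choose m i * 2 ^ m := Finset.sum_mul _ _ _
    _ ≤ ∑ i ∈ Finset.range (C + 1), 2 ^ C * (2 ^ (m - i) * Nat.choose m i) := by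
        refine Finset.sum_le_sum fun i hi => ?_
        have hi' : i ≤ C := Nat.lt_succ_iff.mp (Finset.mem_range.mp hi)
        have hp : (2 : ℕ) ^ m ≤ 2 ^ C * 2 ^ (m - i) := by
          rw [← pow_add]
          exact Nat.pow_le_pow_right (by norm_num) (by omega)
        calc Nat.choose m i * 2 ^ m ≤ Nat.choose m i * (2 ^ C * 2 ^ (m - i)) :=
              Nat.mul_le_mul_left _ hp
          _ = _ := by ring
    _ = 2 ^ C * ∑ i ∈ Finset.range (C + 1), 2 ^ (m - i) * Nat.choose m i :=
        (Finset.mul_sum _ _ _).symm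
    _ ≤ 2 ^ C * 3 ^ m := by
        rw [h3]
        refine Nat.mul_le_mul_left _ (Finset.sum_le_sum_of_subset ?_)
        exact Finset.range_subset_range.mpr (by omega)

/-- Let `n ≥ 2` and `C ≥ 0` be integers, and set
`Q' := C + ⌈16(⌈log₂ n⌉ + C)⌉ = C + 16(⌈log₂ n⌉ + C)`.
Then `2 ^ (Q' − C) > n · Σ_{i=0}^{C} binom(Q' − C, i)`. -/
theorem rivest_key_inequality (n C : ℕ) (hn : 2 ≤ n) :
    n * ∑ i ∈ Finset.range (C + 1),
        Nat.choose ((C + 16 * (Nat.clog 2 n + C)) - C) i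
      < 2 ^ ((C + 16 * (Nat.clog 2 n + C)) - C) := by
  rw [Nat.add_sub_cancel_left]
  have hL : 0 < Nat.clog 2 n := Nat.clog_pos (by norm_num) hn
  have hnL : n ≤ 2 ^ Nat.clog 2 n := Nat.le_pow_clog (by norm_num) n
  generalize Nat.clog 2 n = L at hL hnL ⊢
  have hS := sum_choose_mul_two_pow_le (16 * (L + C)) C (by omega)
  generalize ∑ i ∈ Finset.range (C + 1), Nat.choose (16 * (L + C)) i = S at hS ⊢
  refine lt_of_mul_lt_mul_right (a := 2 ^ (16 * (L + C))) ?_ (Nat.zero_le _)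
  calc n * S * 2 ^ (16 * (L + C)) = n * (S * 2 ^ (16 * (L + C))) := mul_assoc _ _ _
    _ ≤ 2 ^ L * (2 ^ C * 3 ^ (16 * (L + C))) := Nat.mul_le_mul hnL hS
    _ = (2 * 3 ^ 16) ^ (L + C) := by
        rw [mul_pow, ← pow_mul, ← mul_assoc, ← pow_add]
    _ < (4 ^ 16) ^ (L + C) := Nat.pow_lt_pow_left (by norm_num) (by omega)
    _ = 2 ^ (16 * (L + C)) * 2 ^ (16 * (L + C)) := by
        rw [← mul_pow, ← pow_mul]; norm_num
end

section
/- Consider robust dynamic pricing with valuation v* ∈ [0,1], horizon T, and at most C corrupted feedback observations, with C known to the seller. There exists a pricing algorithm (running Rivest et al.'s robust binary search over a partition of [0,1] into T intervals of length 1/T and then committing to the left endpoint of the identified interval) whose regret satisfies R_T ≤ O(C + log T). -/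
/-!
The seller walks on the infinite binary tree of dyadic cells `[k / 2 ^ n, (k + 1) / 2 ^ n)`.
A block of three rounds is spent at each visited cell: the prices are its left end, its right end
and its midpoint. If the first two answers are compatible with `v` lying in the cell, the
walk descends to the half indicated by the third answer; otherwise it backtracks to the parent.

For a node of depth `n` whose deepest common ancestor with the branch of cells containing `v` has
depth `a`, consider the potential `2 * a - n`. A block with truthful answers raises it by at least
one (`potential_step_truthful`), and no block lowers it by more than one (`potential_step`). Hence
after `N = 2 * C + L` blocks, where `L = ⌈log₂ T⌉`, the potential is at least `N - 2 * C = L`, which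
forces the ancestor at depth `L` of the current node to be the cell containing `v`
(`ancestor_eq`). The seller commits to the left end of that cell, losing at most
`2 ^ (-L) ≤ 1 / T` per round, while the `3 * N` rounds of search lose at most `1` each.
This gives regret at most `3 * (2 * C + L) + 1`.
-/

namespace RobustPricing

/-- The next cell of the walk after the answers `r₁, r₂, r₃` to the prices at the left end, the
right end and the midpoint of the cell `s = (k, n)`, which stands for
`[k / 2 ^ n, (k + 1) / 2 ^ n)`. The answer at the right end is ignored when that end is `1`, so that
the last cell of each level also accounts for `v = 1`. The parent of the root is the root. -/
def step (s : ℕ × ℕ) (r₁ r₂ r₃ : Bool) : ℕ × ℕ :=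
  if r₁ = true ∧ ¬ (r₂ = true ∧ s.1 + 1 < 2 ^ s.2) then (2 * s.1 + r₃.toNat, s.2 + 1)
  else (s.1 / 2, s.2 - 1)

/-- The cell reached after `j` blocks of three rounds with observed answers `o`. -/
def walk (o : ℕ → Bool) : ℕ → ℕ × ℕ
  | 0 => (0, 0)
  | j + 1 => step (walk o j) (o (3 * j)) (o (3 * j + 1)) (o (3 * j + 2))

/-- The dyadic price `k / 2 ^ n`, truncated at `1`. -/
noncomputable def gridPrice (k n : ℕ) : ℝ := min 1 ((k : ℝ) / 2 ^ n)

/-- The price posted in the round numbered `i` (modulo `3`) of a block spent at the cell `s`. -/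
noncomputable def query (s : ℕ × ℕ) (i : ℕ) : ℝ :=
  if i = 0 then gridPrice s.1 s.2
  else if i = 1 then gridPrice (s.1 + 1) s.2
  else gridPrice (2 * s.1 + 1) (s.2 + 1)

/-- The price posted in round `t`: search for `N` blocks, then commit to the left end of the
ancestor at depth `L` of the cell that was reached. -/
noncomputable def price (N L : ℕ) (o : ℕ → Bool) (t : ℕ) : ℝ :=
  if t < 3 * N then query (walk o (t / 3)) (t % 3)
  else gridPrice ((walk o N).1 / 2 ^ ((walk o N).2 - L)) L

/-- The index of the cell at level `n` that contains `v`; the last cell is closed at `1`. -/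
noncomputable def cell (v : ℝ) (n : ℕ) : ℕ := min ⌊v * 2 ^ n⌋₊ (2 ^ n - 1)

/-- The potential `2 * a - n` of the node `(k, n)`, where `a` is the depth of its deepest ancestor
(itself included) on the branch `c`. -/
def potential (c : ℕ → ℕ) (k : ℕ) : ℕ → ℤ
  | 0 => 0
  | n + 1 => if k = c (n + 1) then (n + 1 : ℤ) else potential c (k / 2) n - 1

/-! ### Prices and the branch of cells containing the valuation -/

lemma gridPrice_mem (k n : ℕ) : gridPrice k n ∈ Set.Icc (0 : ℝ) 1 :=
  ⟨le_min zero_le_one (by positivity), min_le_left _ _⟩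

lemma price_mem (N L : ℕ) (o : ℕ → Bool) (t : ℕ) : price N L o t ∈ Set.Icc (0 : ℝ) 1 := by
  unfold price query
  split_ifs <;> exact gridPrice_mem _ _

lemma cell_zero (v : ℝ) : cell v 0 = 0 := by simp [cell]

lemma cell_succ_div (v : ℝ) (n : ℕ) : cell v (n + 1) / 2 = cell v n := by
  have h : ⌊v * 2 ^ n⌋₊ = ⌊v * 2 ^ (n + 1)⌋₊ / 2 := by
    rw [← Nat.floor_div_natCast]
    congr 1
    push_cast
    ring
  have h2 : 2 ^ (n + 1) = 2 * 2 ^ n := by ring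
  have h3 : 0 < 2 ^ n := by positivity
  unfold cell
  omega

lemma gridPrice_le_iff {v : ℝ} (hv : v ∈ Set.Icc (0 : ℝ) 1) {k n : ℕ} (hk : k < 2 ^ n) :
    gridPrice k n ≤ v ↔ k ≤ cell v n := by
  have hp : (0 : ℝ) < 2 ^ n := by positivity
  have hk' : (k : ℝ) / 2 ^ n ≤ 1 := by
    rw [div_le_one hp]
    exact_mod_cast hk.le
  rw [gridPrice, min_eq_right hk', div_le_iff₀ hp, cell, le_min_iff,
    Nat.le_floor_iff (mul_nonneg hv.1 hp.le)]
  constructor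
  · intro h
    exact ⟨h, by omega⟩
  · exact fun h => h.1

lemma cell_lt (v : ℝ) (n : ℕ) : cell v n < 2 ^ n := by
  have h3 : 0 < 2 ^ n := by positivity
  unfold cell
  omega

lemma sub_gridPrice_cell_le {v : ℝ} (hv : v ∈ Set.Icc (0 : ℝ) 1) (n : ℕ) :
    v - gridPrice (cell v n) n ≤ 1 / 2 ^ n := by
  have hp : (0 : ℝ) < 2 ^ n := by positivity
  have hk' : (cell v n : ℝ) / 2 ^ n ≤ 1 := by
    rw [div_le_one hp]
    exact_mod_cast (cell_lt v n).le
  have key : v * 2 ^ n ≤ cell v n + 1 := by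
    unfold cell
    rcases min_choice ⌊v * 2 ^ n⌋₊ (2 ^ n - 1) with h | h <;> rw [h]
    · exact (Nat.lt_floor_add_one _).le
    · rw [Nat.cast_sub Nat.one_le_two_pow]
      push_cast
      nlinarith [hv.2]
  rw [gridPrice, min_eq_right hk', sub_le_iff_le_add, ← add_div, le_div_iff₀ hp]
  linarith

/-! ### The potential along the walk -/

lemma step_lt {s : ℕ × ℕ} (hs : s.1 < 2 ^ s.2) (r₁ r₂ r₃ : Bool) :
    (step s r₁ r₂ r₃).1 < 2 ^ (step s r₁ r₂ r₃).2 := by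
  obtain ⟨k, n⟩ := s
  unfold step
  split_ifs
  · have := Bool.toNat_le r₃
    simp only [pow_succ] at *
    omega
  · cases n with
    | zero => simp_all
    | succ n =>
      simp only [pow_succ, Nat.add_sub_cancel] at *
      omega

lemma walk_lt (o : ℕ → Bool) (j : ℕ) : (walk o j).1 < 2 ^ (walk o j).2 := by
  induction j with
  | zero => simp [walk]
  | succ j ih => exact step_lt ih _ _ _

lemma walk_congr {o o' : ℕ → Bool} (j : ℕ) (h : ∀ i < 3 * j, o i = o' i) :
    walk o j = walk o' j := by
  induction j with
  | zero => rfl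
  | succ j ih =>
    rw [walk, walk, ih fun i hi => h i (by omega), h _ (by omega), h _ (by omega), h _ (by omega)]

lemma price_congr (N L : ℕ) {o o' : ℕ → Bool} (t : ℕ) (h : ∀ i < t, o i = o' i) :
    price N L o t = price N L o' t := by
  unfold price
  split_ifs with ht
  · rw [walk_congr (t / 3) fun i hi => h i (by omega)]
  · rw [walk_congr N fun i hi => h i (by omega)]

section Potential

variable {c : ℕ → ℕ}

lemma potential_self (n : ℕ) : potential c (c n) n = n := by
  cases n <;> simp [potential]

lemma potential_parent (hc : ∀ n, c (n + 1) / 2 = c n) (k n : ℕ) :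
    potential c k n - 1 ≤ potential c (k / 2) (n - 1) := by
  cases n with
  | zero => simp [potential]
  | succ n =>
    by_cases h : k = c (n + 1)
    · subst h
      rw [potential_self, hc, Nat.add_sub_cancel, potential_self]
      push_cast
      omega
    · simp only [potential, if_neg h, Nat.add_sub_cancel]
      omega

/-- Whatever the answers are, a block lowers the potential by at most one. -/
lemma potential_step (hc : ∀ n, c (n + 1) / 2 = c n) (s : ℕ × ℕ)
    (r₁ r₂ r₃ : Bool) :
    potential c s.1 s.2 - 1 ≤ potential c (step s r₁ r₂ r₃).1 (step s r₁ r₂ r₃).2 := by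
  obtain ⟨k, n⟩ := s
  unfold step
  split_ifs
  · have hr := Bool.toNat_le r₃
    have hk : (2 * k + r₃.toNat) / 2 = k := by omega
    simp only [potential, hk]
    split_ifs with h
    · have : k = c n := by rw [← hc, ← h, hk]
      rw [this, potential_self]
      omega
    · exact le_rfl
  · exact potential_parent hc k n

/-- A block with truthful answers raises the potential by at least one. -/
lemma potential_step_truthful (hc : ∀ n, c (n + 1) / 2 = c n)
    (hlt : ∀ n, c n < 2 ^ n) {s : ℕ × ℕ} (hs : s.1 < 2 ^ s.2) {r₁ r₂ r₃ : Bool}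
    (h₁ : r₁ = true ↔ s.1 ≤ c s.2) (h₂ : s.1 + 1 < 2 ^ s.2 → (r₂ = true ↔ s.1 + 1 ≤ c s.2))
    (h₃ : r₃ = true ↔ 2 * s.1 + 1 ≤ c (s.2 + 1)) :
    potential c s.1 s.2 + 1 ≤ potential c (step s r₁ r₂ r₃).1 (step s r₁ r₂ r₃).2 := by
  obtain ⟨k, n⟩ := s
  simp only at *
  have hcond : (r₁ = true ∧ ¬ (r₂ = true ∧ k + 1 < 2 ^ n)) ↔ k = c n := by
    have := hlt n
    by_cases hk : k + 1 < 2 ^ n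
    · rw [h₁, h₂ hk]
      omega
    · rw [h₁]
      omega
  unfold step
  simp only [hcond]
  split_ifs with h
  · have hchild : 2 * k + r₃.toNat = c (n + 1) := by
      have := hc n
      cases r₃ <;> simp at h₃ ⊢ <;> omega
    simp only
    rw [hchild, h, potential_self, potential_self]
    push_cast
    exact le_rfl
  · cases n with
    | zero =>
      have := hlt 0
      simp only [pow_zero] at hs this
      omega
    | succ n => simp [potential, if_neg h]

/-- A node of potential at least `m` lies below the node at depth `m` of the branch `c`. -/
lemma ancestor_eq (hc : ∀ n, c (n + 1) / 2 = c n) (h0 : c 0 = 0) (m n k : ℕ) (hk : k < 2 ^ n)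
    (h : (m : ℤ) ≤ potential c k n) : k / 2 ^ (n - m) = c m := by
  have hbranch : ∀ d, c (m + d) / 2 ^ d = c m := by
    intro d
    induction d with
    | zero => simp
    | succ d ih => rw [pow_succ', ← Nat.div_div_eq_div_mul, ← add_assoc, hc, ih]
  induction n generalizing k with
  | zero =>
    simp only [potential] at h
    obtain rfl : m = 0 := by omega
    simp_all
  | succ n ih =>
    by_cases hkc : k = c (n + 1)
    · subst hkc
      rw [potential_self] at h
      have hb := hbranch (n + 1 - m)
      rwa [Nat.add_sub_cancel' (by exact_mod_cast h)] at hb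
    · simp only [potential, if_neg hkc] at h
      have hpar := ih (k / 2) (by rw [pow_succ] at hk; omega) (by omega)
      -- the potential never exceeds the depth, so `m ≤ n`
      have hbound : ∀ n k, potential c k n ≤ n := by
        intro n
        induction n with
        | zero => simp [potential]
        | succ n ih =>
          intro k
          have := ih (k / 2)
          simp only [potential]
          split_ifs <;> push_cast <;> omega
      have hmn := hbound n (k / 2)
      rw [Nat.div_div_eq_div_mul, ← pow_succ'] at hpar
      rwa [Nat.succ_sub (by omega)]

end Potential

/-! ### Counting corruptions -/

/-- The number of rounds before `m` in which the answers `o` to the posted prices are corrupted. -/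
noncomputable def corruptions (N L : ℕ) (v : ℝ) (o : ℕ → Bool) (m : ℕ) : ℕ :=
  ((Finset.range m).filter fun t => o t ≠ decide (price N L o t ≤ v)).card

lemma corruptions_succ (N L : ℕ) (v : ℝ) (o : ℕ → Bool) (m : ℕ) :
    corruptions N L v o (m + 1) =
      corruptions N L v o m + if o m ≠ decide (price N L o m ≤ v) then 1 else 0 := by
  unfold corruptions
  rw [Finset.range_add_one, Finset.filter_insert]
  split_ifs
  · rw [Finset.card_insert_of_notMem (by simp)]
  · rfl

/-- Each corrupted block costs two units of potential relative to a truthful one. -/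
lemma potential_walk {v : ℝ} (hv : v ∈ Set.Icc (0 : ℝ) 1) (N L : ℕ) (o : ℕ → Bool) (j : ℕ)
    (hj : j ≤ N) :
    (j : ℤ) - 2 * corruptions N L v o (3 * j) ≤
      potential (cell v) (walk o j).1 (walk o j).2 := by
  induction j with
  | zero => simp [walk, potential, corruptions]
  | succ j ih =>
    have ih := ih (by omega)
    have e : 3 * (j + 1) = 3 * j + 1 + 1 + 1 := by ring
    rw [e, corruptions_succ, corruptions_succ, corruptions_succ, walk]
    have p0 : price N L o (3 * j) = gridPrice (walk o j).1 (walk o j).2 := by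
      rw [price, if_pos (by omega), query, if_pos (by omega)]
      congr <;> omega
    have p1 : price N L o (3 * j + 1) = gridPrice ((walk o j).1 + 1) (walk o j).2 := by
      rw [price, if_pos (by omega), query, if_neg (by omega), if_pos (by omega)]
      congr <;> omega
    have p2 : price N L o (3 * j + 1 + 1) =
        gridPrice (2 * (walk o j).1 + 1) ((walk o j).2 + 1) := by
      rw [price, if_pos (by omega), query, if_neg (by omega), if_neg (by omega)]
      congr <;> omega
    have hw := walk_lt o j
    have hany := potential_step (cell_succ_div v) (walk o j)
      (o (3 * j)) (o (3 * j + 1)) (o (3 * j + 2))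
    by_cases htrue : o (3 * j) = decide (price N L o (3 * j) ≤ v) ∧
        o (3 * j + 1) = decide (price N L o (3 * j + 1) ≤ v) ∧
        o (3 * j + 1 + 1) = decide (price N L o (3 * j + 1 + 1) ≤ v)
    · obtain ⟨t0, t1, t2⟩ := htrue
      have hgood := potential_step_truthful (cell_succ_div v) (cell_lt v) hw
        (r₁ := o (3 * j)) (r₂ := o (3 * j + 1)) (r₃ := o (3 * j + 2))
        (by rw [t0, decide_eq_true_iff, p0, gridPrice_le_iff hv hw])
        (fun h => by rw [t1, decide_eq_true_iff, p1, gridPrice_le_iff hv h])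
        (by
          rw [show 3 * j + 2 = 3 * j + 1 + 1 from rfl, t2, decide_eq_true_iff, p2,
            gridPrice_le_iff hv (by rw [pow_succ]; omega)])
      rw [if_neg (not_not.2 t0), if_neg (not_not.2 t1), if_neg (not_not.2 t2)]
      push_cast
      omega
    · have hone : 1 ≤ (if o (3 * j) ≠ decide (price N L o (3 * j) ≤ v) then 1 else 0) +
          (if o (3 * j + 1) ≠ decide (price N L o (3 * j + 1) ≤ v) then 1 else 0) +
          (if o (3 * j + 1 + 1) ≠ decide (price N L o (3 * j + 1 + 1) ≤ v) then 1 else 0) := by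
        by_contra hcon
        apply htrue
        refine ⟨?_, ?_, ?_⟩ <;> by_contra hne <;> rw [if_pos hne] at hcon <;> omega
      generalize (if o (3 * j) ≠ _ then 1 else 0) = x₀ at hone ⊢
      generalize (if o (3 * j + 1) ≠ _ then 1 else 0) = x₁ at hone ⊢
      generalize (if o (3 * j + 1 + 1) ≠ _ then 1 else 0) = x₂ at hone ⊢
      push_cast
      omega

/-- After the search phase the posted price is at most `2 ^ (-L)` below the valuation. -/
lemma commit_loss {v : ℝ} (hv : v ∈ Set.Icc (0 : ℝ) 1) (C L : ℕ) (o : ℕ → Bool) {T t : ℕ}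
    (hC : corruptions (2 * C + L) L v o T ≤ C) (ht : 3 * (2 * C + L) ≤ t) (htT : t < T) :
    price (2 * C + L) L o t ≤ v ∧ v - price (2 * C + L) L o t ≤ 1 / 2 ^ L := by
  have hmono : corruptions (2 * C + L) L v o (3 * (2 * C + L)) ≤
      corruptions (2 * C + L) L v o T := by
    unfold corruptions
    gcongr
    omega
  have hpot := potential_walk hv (2 * C + L) L o (2 * C + L) le_rfl
  have hanc := ancestor_eq (cell_succ_div v) (cell_zero v) L _ _ (walk_lt o (2 * C + L))
    (by push_cast at hpot ⊢; omega)
  rw [price, if_neg (by omega), hanc]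
  exact ⟨(gridPrice_le_iff hv (cell_lt v L)).2 le_rfl, sub_gridPrice_cell_le hv L⟩

end RobustPricing


/-- Consider robust dynamic pricing with valuation `v ∈ [0,1]`, horizon `T`,
and at most `C` corrupted feedback observations, with `C` known to the seller. There exists a
(deterministic) pricing algorithm — a map from past observed feedback to prices in `[0,1]`,
which may depend on `T` and `C` — whose regret is `O(C + log T)`: there is a universal
constant `K > 0` such that the regret is at most `K · (C + ⌈log₂ T⌉ + 1)` against every
valuation `v ∈ [0,1]` and every feedback sequence corrupted in at most `C` rounds. -/
theorem rivest_pricing_known_corruption :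
    ∃ K : ℝ, 0 < K ∧
      ∀ T C : ℕ, ∃ alg : List Bool → ℝ,
        (∀ l : List Bool, alg l ∈ Set.Icc (0 : ℝ) 1) ∧
        ∀ v ∈ Set.Icc (0 : ℝ) 1, ∀ obs : ℕ → Bool,
          ((Finset.range T).filter
              (fun t => obs t ≠ decide (alg ((List.range t).map obs) ≤ v))).card ≤ C →
          (T : ℝ) * v - ∑ t ∈ Finset.range T,
              alg ((List.range t).map obs) *
                (if alg ((List.range t).map obs) ≤ v then 1 else 0)
            ≤ K * ((C : ℝ) + (Nat.clog 2 T : ℝ) + 1) := by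
  refine ⟨6, by norm_num, fun T C => ?_⟩
  set L := Nat.clog 2 T with hL
  set N := 2 * C + L with hN
  refine ⟨fun l => RobustPricing.price N L (fun i => l.getD i false) l.length,
    fun l => RobustPricing.price_mem _ _ _ _, ?_⟩
  intro v hv obs hcorr
  have hprice : ∀ t, RobustPricing.price N L
      (fun i => ((List.range t).map obs).getD i false) ((List.range t).map obs).length =
      RobustPricing.price N L obs t := by
    intro t
    rw [List.length_map, List.length_range]
    refine RobustPricing.price_congr N L t fun i hi => ?_
    simp [List.getD, hi]
  simp only [hprice] at hcorr ⊢
  have hround : ∀ t ∈ Finset.range T,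
      v - RobustPricing.price N L obs t *
        (if RobustPricing.price N L obs t ≤ v then 1 else 0) ≤
      (if t < 3 * N then 1 else 0) + 1 / 2 ^ L := by
    intro t ht
    have hpos : (0 : ℝ) < 1 / 2 ^ L := by positivity
    have hp := RobustPricing.price_mem N L obs t
    by_cases h : t < 3 * N
    · rw [if_pos h]
      have : 0 ≤ RobustPricing.price N L obs t *
          (if RobustPricing.price N L obs t ≤ v then 1 else 0) :=
        mul_nonneg hp.1 (by split_ifs <;> norm_num)
      linarith [hv.2]
    · obtain ⟨h1, h2⟩ := RobustPricing.commit_loss hv C L obs hcorr (not_lt.1 h)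
        (Finset.mem_range.1 ht)
      rw [if_neg h, if_pos h1]
      linarith
  have hsum := Finset.sum_le_sum hround
  rw [Finset.sum_sub_distrib, Finset.sum_add_distrib, Finset.sum_const, Finset.sum_const,
    Finset.card_range, nsmul_eq_mul, nsmul_eq_mul, Finset.sum_boole] at hsum
  have hsearch : (((Finset.range T).filter fun t => t < 3 * N).card : ℝ) ≤ 3 * N := by
    have : ((Finset.range T).filter fun t => t < 3 * N).card ≤ (Finset.range (3 * N)).card :=
      Finset.card_le_card fun t ht => Finset.mem_range.2 (Finset.mem_filter.1 ht).2
    rw [Finset.card_range] at this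
    exact_mod_cast this
  have hcommit : (T : ℝ) * (1 / 2 ^ L) ≤ 1 := by
    rw [mul_one_div, div_le_one (by positivity)]
    exact_mod_cast Nat.le_pow_clog one_lt_two T
  have hNr : (N : ℝ) = 2 * C + L := by rw [hN]; push_cast; ring
  have hL0 : (0 : ℝ) ≤ L := Nat.cast_nonneg L
  linarith
end

section
/- Let T ≥ 1, δ ∈ (0,1), and let h ≥ 0 be an integer with h + 1 > 4 ln(T/δ). Set m_h := ⌈e(h+1)⌉ and q_n := min{4 ln(T/δ)/n, 1}. Then Π_{n=h+1}^{m_h} (1 − q_n) ≤ exp(−4 ln(T/δ)) = (δ/T)⁴. -/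
/-!
For `n ≥ h + 1 > L := 4 log (T / δ)` the minimum is `L / n`, so each factor is at most
`exp (-L / n)` and the product is at most `exp (-L * ∑ 1 / n)`. Comparing the harmonic block with
a telescoping sum of logarithms gives `∑ 1 / n ≥ log ((m + 1) / (h + 1)) ≥ 1`, because
`m = ⌈e (h + 1)⌉`; as `L ≥ 0`, the bound `exp (-L)` follows.
-/

/-- Telescoping of `log (n + 1) - log n ≤ 1 / n`. -/
lemma log_sub_log_le_sum_Icc (h m : ℕ) (hm : h ≤ m) :
    Real.log ((m : ℝ) + 1) - Real.log ((h : ℝ) + 1) ≤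
      ∑ n ∈ Finset.Icc (h + 1) m, 1 / (n : ℝ) := by
  induction m, hm using Nat.le_induction with
  | base => simp
  | succ m hm ih =>
    rw [Finset.sum_Icc_succ_top (by omega)]
    have hm0 : (0 : ℝ) < (m : ℝ) + 1 := by positivity
    have key := Real.log_le_sub_one_of_pos (x := ((m : ℝ) + 1 + 1) / ((m : ℝ) + 1)) (by positivity)
    rw [Real.log_div (by positivity) (by positivity)] at key
    have e : ((m : ℝ) + 1 + 1) / ((m : ℝ) + 1) - 1 = 1 / ((m : ℝ) + 1) := by
      field_simp
      ring
    push_cast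
    linarith

/-- Let `T ≥ 1`, `δ ∈ (0,1)`, and let `h ≥ 0` be an integer with
`h + 1 > 4 ln(T/δ)`. Set `m_h := ⌈e(h+1)⌉` and `q_n := min{4 ln(T/δ)/n, 1}`. Then
`Π_{n=h+1}^{m_h} (1 − q_n) ≤ exp(−4 ln(T/δ)) = (δ/T)⁴`. -/
theorem survival_product_bound (T : ℕ) (hT : 1 ≤ T) (δ : ℝ) (hδ : δ ∈ Set.Ioo (0 : ℝ) 1)
    (h : ℕ) (hh : 4 * Real.log ((T : ℝ) / δ) < (h : ℝ) + 1) :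
    (∏ n ∈ Finset.Icc (h + 1) (⌈Real.exp 1 * ((h : ℝ) + 1)⌉₊),
        (1 - min (4 * Real.log ((T : ℝ) / δ) / (n : ℝ)) 1))
      ≤ Real.exp (-(4 * Real.log ((T : ℝ) / δ))) ∧
    Real.exp (-(4 * Real.log ((T : ℝ) / δ))) = (δ / (T : ℝ)) ^ 4 := by
  obtain ⟨hδ0, hδ1⟩ := hδ
  have hT' : (1 : ℝ) ≤ T := by exact_mod_cast hT
  have hT0 : (0 : ℝ) < T := by linarith
  constructor
  · have hL : 0 ≤ 4 * Real.log ((T : ℝ) / δ) := by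
      have := Real.log_nonneg (x := (T : ℝ) / δ) (by rw [le_div_iff₀ hδ0]; linarith)
      linarith
    generalize 4 * Real.log ((T : ℝ) / δ) = L at hh hL
    have hh0 : (0 : ℝ) < (h : ℝ) + 1 := by positivity
    have hceil := Nat.le_ceil (Real.exp 1 * ((h : ℝ) + 1))
    generalize ⌈Real.exp 1 * ((h : ℝ) + 1)⌉₊ = m at hceil
    have hexp : 1 ≤ Real.exp 1 := Real.one_le_exp zero_le_one
    have hm : h ≤ m := by
      have : (h : ℝ) ≤ m := by nlinarith
      exact_mod_cast this
    have hsum : 1 ≤ ∑ n ∈ Finset.Icc (h + 1) m, 1 / (n : ℝ) := by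
      have h1 := log_sub_log_le_sum_Icc h m hm
      have h2 : Real.log (Real.exp 1 * ((h : ℝ) + 1)) ≤ Real.log ((m : ℝ) + 1) :=
        Real.log_le_log (by positivity) (by linarith)
      rw [Real.log_mul (by positivity) (by positivity), Real.log_exp] at h2
      linarith
    have hq : ∀ n ∈ Finset.Icc (h + 1) m, min (L / (n : ℝ)) 1 = L / n := by
      intro n hn
      have hn1 : (h : ℝ) + 1 ≤ n := by exact_mod_cast (Finset.mem_Icc.mp hn).1
      exact min_eq_left ((div_le_one (by linarith)).2 (by linarith))
    calc ∏ n ∈ Finset.Icc (h + 1) m, (1 - min (L / (n : ℝ)) 1)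
        ≤ ∏ n ∈ Finset.Icc (h + 1) m, Real.exp (-(L / n)) := by
          refine Finset.prod_le_prod (fun n _ => sub_nonneg.2 (min_le_right _ _)) fun n hn => ?_
          rw [hq n hn]
          exact Real.one_sub_le_exp_neg _
      _ = Real.exp (-(L * ∑ n ∈ Finset.Icc (h + 1) m, 1 / (n : ℝ))) := by
          rw [← Real.exp_sum, Finset.sum_neg_distrib, Finset.mul_sum]
          simp only [mul_one_div]
      _ ≤ Real.exp (-L) := by
          apply Real.exp_le_exp.2
          nlinarith
  · have e : -(4 * Real.log ((T : ℝ) / δ)) = ((4 : ℕ) : ℝ) * Real.log (δ / T) := by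
      rw [← inv_div δ (T : ℝ), Real.log_inv]
      push_cast
      ring
    rw [e, Real.exp_nat_mul, Real.exp_log (by positivity)]
end
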